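/- Let n be a real number and f(t) = t^2 * (1 + ln(n/t)). For reals x, y with 1 ≤ x ≤ y and y + 1 ≤ n/2, the partial derivative bound holds: (2y+2)*ln(n/(y+1)) - 2y*ln(n/y) + 1 ≥ 0. -/

import Mathlib

/-- The derivative in `y` of `f(y+1) - f(y)` is nonnegative for `1 ≤ y` and `y + 1 ≤ n/2`. -/
theorem f_diff_deriv_nonneg (n y : ℝ) (hy : 1 ≤ y) (hyn : y + 1 ≤ n / 2) :
    0 ≤ (2 * y + 2) * Real.log (n / (y + 1)) - 2 * y * Real.log (n / y) + 1 := by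
  have hy0 : 0 < y := by linarith
  have hy1 : 0 < y + 1 := by linarith
  have hn : 0 < n := by linarith
  have hL : Real.log 2 ≤ Real.log (n / (y + 1)) := by
    apply Real.log_le_log two_pos
    rw [le_div_iff₀ hy1]
    linarith
  have hsplit : Real.log (n / y) = Real.log (n / (y + 1)) + Real.log ((y + 1) / y) := by
    rw [← Real.log_mul (by positivity) (by positivity)]
    congr 1
    field_simp
  have hstep : y * Real.log ((y + 1) / y) ≤ 1 := by
    have h := Real.log_le_sub_one_of_pos (div_pos hy1 hy0)
    calc y * Real.log ((y + 1) / y) ≤ y * ((y + 1) / y - 1) := by gcongr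
      _ = 1 := by field_simp; ring
  rw [hsplit]
  linarith [Real.log_two_gt_d9]
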